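/- There do not exist constants F, S ∈ ℝ, a period p > 0, and a nonconstant p-periodic C¹ function u : ℝ → ℝ with inf_{x∈ℝ} u(x) > 0 satisfying ½ u(x) u'(x)² = F − S u(x) + u(x)³/6 for all x ∈ ℝ. In other words, the stationary regularised Burgers equation admits no smooth periodic traveling waves bounded away from zero. -/

import Mathlib

/-!
A continuous periodic function attains its minimum `m` and its maximum `M`, and `u'` vanishes at
both points, so `m` and `M` are roots of the cubic `P v = F - S v + v³ / 6`. If `u` is not
constant then `0 < m < M`, and since `P` is strictly convex on the positive half-line,
`P` is negative at the midpoint of `m` and `M`. By the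
intermediate value theorem `u` takes the midpoint value, and there `u u'² / 2 = P u < 0`, which
contradicts `u > 0`.
-/

open Set Filter

/-- **Non-existence of smooth periodic traveling waves** (Section 6.5): there is no
nonconstant periodic `C¹` solution of the stationary regularised Burgers ODE
`½uu'² = F − Su + u³/6` that is bounded away from zero. -/
theorem no_smooth_periodic_waves :
    ¬ ∃ (F S p : ℝ) (u u' : ℝ → ℝ),
        0 < p ∧ Function.Periodic u p ∧ (∃ a b : ℝ, u a ≠ u b) ∧
        (∃ c : ℝ, 0 < c ∧ ∀ x : ℝ, c ≤ u x) ∧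
        (∀ x : ℝ, HasDerivAt u (u' x) x) ∧ Continuous u' ∧
        (∀ x : ℝ, u x * u' x ^ 2 / 2 = F - S * u x + u x ^ 3 / 6) := by
  rintro ⟨F, S, p, u, u', hp, hper, ⟨a, b, hab⟩, ⟨c, hc, hcu⟩, hd, -, hode⟩
  have hcont : Continuous u :=
    continuous_iff_continuousAt.2 fun x => (hd x).continuousAt
  have hne : (Icc 0 p).Nonempty := nonempty_Icc.2 hp.le
  obtain ⟨s, -, hs⟩ := isCompact_Icc.exists_isMinOn hne hcont.continuousOn
  obtain ⟨t, -, ht⟩ := isCompact_Icc.exists_isMaxOn hne hcont.continuousOn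
  -- By periodicity, the extrema over one period are global.
  have hmin : ∀ x, u s ≤ u x := fun x => by
    obtain ⟨y, hy, hxy⟩ := hper.exists_mem_Ico₀ hp x
    rw [hxy]
    exact hs (Ico_subset_Icc_self hy)
  have hmax : ∀ x, u x ≤ u t := fun x => by
    obtain ⟨y, hy, hxy⟩ := hper.exists_mem_Ico₀ hp x
    rw [hxy]
    exact ht (Ico_subset_Icc_self hy)
  have hlt : u s < u t := by
    by_contra! h
    exact hab (by linarith [hmin a, hmax a, hmin b, hmax b])
  have hds : u' s = 0 :=
    IsLocalMin.hasDerivAt_eq_zero (Eventually.of_forall hmin) (hd s)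
  have hdt : u' t = 0 :=
    IsLocalMax.hasDerivAt_eq_zero (Eventually.of_forall hmax) (hd t)
  have hPs := hode s
  have hPt := hode t
  rw [hds] at hPs
  rw [hdt] at hPt
  obtain ⟨x, hx⟩ : (u s + u t) / 2 ∈ range u :=
    mem_range_of_exists_le_of_exists_ge hcont ⟨s, by linarith⟩ ⟨t, by linarith⟩
  have hPx := hode x
  have hnonneg : 0 ≤ u x * u' x ^ 2 / 2 := by
    have := hc.trans_le (hcu x)
    positivity
  rw [hPx, hx] at hnonneg
  -- The convexity gap `(m³ + M³) / 2 - ((m + M) / 2)³` equals `3 / 8 * (m + M) * (M - m)²`.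
  have hgap : 0 < (u s + u t) * (u t - u s) ^ 2 := by
    have h1 := hc.trans_le (hcu s)
    have h2 := hc.trans_le (hcu t)
    have h3 := sub_pos.2 hlt
    positivity
  nlinarith
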